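/- Pointwise differential inequality for the norm of a solution of the linearized flow: there exists a constant C₀ = C₀(n) with the following property. If u, h: ℝⁿ × I → (n×n skew-symmetric real matrices)ⁿ are smooth (I ⊆ ℝ an interval) and satisfy ∂_τ u_j = (Lu)_j + h_j for every j, then at every point (y, τ) where u(y, τ) ≠ 0 one has ∂_τ‖u‖_F − Δ_y‖u‖_F + (1/2)·Σ_i y_i ∂_i‖u‖_F + (1/2)‖u‖_F ≤ ‖h‖_F + (C₀/(1 + |y|²))·‖u‖_F, where ‖u‖_F² = Σ_j ‖u_j‖_F² and the derivatives of ‖u‖_F are classical. -/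

import Mathlib

open scoped BigOperators

noncomputable section

/-- Euclidean space `ℝⁿ`. -/
abbrev En (n : ℕ) := EuclideanSpace ℝ (Fin n)

/-- `n × n` real matrices, represented entrywise. -/
abbrev Mat (n : ℕ) := Fin n → Fin n → ℝ

variable {n : ℕ}

/-- Frobenius inner product `⟨A,B⟩_F = tr(AᵀB) = Σ_{μν} A_{μν} B_{μν}`. -/
def fipE (A B : Mat n) : ℝ := ∑ μ, ∑ ν, A μ ν * B μ ν

/-- Frobenius norm. -/
def fnormE (A : Mat n) : ℝ := Real.sqrt (fipE A A)

/-- Matrix commutator `[A, B] = AB − BA`, entrywise. -/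
def brkt (A B : Mat n) : Mat n := fun μ ν => ∑ k, (A μ k * B k ν - B μ k * A k ν)

/-- `A` is skew-symmetric. -/
def skewM (A : Mat n) : Prop := ∀ μ ν, A ν μ = -A μ ν

/-- Partial derivative `∂_i f` of a scalar function on `ℝⁿ`. -/
def pder (i : Fin n) (f : En n → ℝ) (y : En n) : ℝ :=
  fderiv ℝ f y (EuclideanSpace.single i 1)

/-- Euclidean Laplacian `Δf = Σ_i ∂_i ∂_i f` of a scalar function on `ℝⁿ`. -/
def lapS (f : En n → ℝ) (y : En n) : ℝ := ∑ i, pder i (fun z => pder i f z) y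

/-- Componentwise partial derivative `∂_i u` of a matrix-valued function on `ℝⁿ`. -/
def pderM (i : Fin n) (u : En n → Mat n) (y : En n) : Mat n :=
  fun μ ν => pder i (fun z => u z μ ν) y

/-- Componentwise Laplacian `Δu` of a matrix-valued function on `ℝⁿ`. -/
def lapM (u : En n → Mat n) (y : En n) : Mat n := fun μ ν => lapS (fun z => u z μ ν) y

/-- The constant `a = √(n−2)/(2√2)`. -/
def aC (n : ℕ) : ℝ := Real.sqrt ((n : ℝ) - 2) / (2 * Real.sqrt 2)

/-- The constant `b = (1/2)(6n − 12 − (n+2)√(2n−4))`. -/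
def bC (n : ℕ) : ℝ := (1 / 2) * (6 * (n : ℝ) - 12 - ((n : ℝ) + 2) * Real.sqrt (2 * (n : ℝ) - 4))

/-- `σ_i(y)`, the skew matrix with entries `(σ_i(y))^μ_ν = δ_{iν} y^μ − δ_{iμ} y^ν`. -/
def sigmaM (i : Fin n) (y : En n) : Mat n :=
  fun μ ν => (if i = ν then y μ else 0) - (if i = μ then y ν else 0)

/-- The soliton connection `W_i(y) = σ_i(y)/(a|y|² + b)`. -/
def Wc (i : Fin n) (y : En n) : Mat n :=
  fun μ ν => sigmaM i y μ ν / (aC n * ‖y‖ ^ 2 + bC n)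

/-- The curvature `F_{ij} = ∂_i W_j − ∂_j W_i + [W_i, W_j]` of the soliton connection `W`. -/
def Fc (i j : Fin n) (y : En n) : Mat n :=
  pderM i (Wc j) y - pderM j (Wc i) y + brkt (Wc i y) (Wc j y)

/-- The linearized operator `L` of the rescaled Yang–Mills de Turck flow at the soliton `W`:
`(Lu)_j = Δu_j − (1/2)Σ_i y_i ∂_i u_j − (1/2)u_j + 2Σ_i [W_i, ∂_i u_j]
  + Σ_i [W_i, [W_i, u_j]] + 2Σ_i [u_i, F_{ij}]`. -/
def Lop (u : En n → Fin n → Mat n) (y : En n) (j : Fin n) : Mat n :=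
  lapM (fun z => u z j) y
    - (1 / 2 : ℝ) • (∑ i, y i • pderM i (fun z => u z j) y)
    - (1 / 2 : ℝ) • u y j
    + (2 : ℝ) • ∑ i, brkt (Wc i y) (pderM i (fun z => u z j) y)
    + ∑ i, brkt (Wc i y) (brkt (Wc i y) (u y j))
    + (2 : ℝ) • ∑ i, brkt (u y i) (Fc i j y)

/-- Squared Frobenius norm of a tuple of matrices: `‖u‖_F² = Σ_j ‖u_j‖_F²`. -/
def tnormSq (v : Fin n → Mat n) : ℝ := ∑ j, fipE (v j) (v j)

/-- The Gaussian weight `ρ(y) = e^{−|y|²/4}`. -/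
def gauss (y : En n) : ℝ := Real.exp (-‖y‖ ^ 2 / 4)

end

/-
Multiply the inequality by `‖u‖` and pair the equation with `u`. The matrices `W_i` are skew, so
`ad W_i` is skew-adjoint for the Frobenius inner product and does not see the length of `u`: hence
`|∂_i‖u‖| ≤ ‖∂_i u + [W_i, u]‖`, the diamagnetic form of Kato's inequality. In the identity
`‖u‖ ∂_i∂_i‖u‖ = ⟪u, ∂_i∂_i u⟫ + ‖∂_i u‖² - (∂_i‖u‖)²` it absorbs all the terms of `L` that are
linear or quadratic in `W`. Only the curvature term is left, and since `a` and `b` are positive the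
curvature decays like `1 / (1 + |y|²)`.
-/

noncomputable section

open scoped InnerProductSpace

section DirDeriv

variable {E V W : Type*} [NormedAddCommGroup E] [NormedSpace ℝ E]
  [NormedAddCommGroup V] [NormedSpace ℝ V] [NormedAddCommGroup W] [NormedSpace ℝ W]

/-- The directional derivative `∂_e f` of a vector-valued function, as a function of the point so
that it can be iterated; `pder i` and `deriv` are the special cases in which `e` is a standard basis
vector or `1`. -/
def dirDeriv (e : E) (f : E → V) (y : E) : V := fderiv ℝ f y e

lemma differentiableAt_dirDeriv {f : E → V} {y : E} (hf : ContDiffAt ℝ 2 f y) (e : E) :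
    DifferentiableAt ℝ (dirDeriv e f) y :=
  ((hf.fderiv_right (m := 1) (by norm_num)).differentiableAt (by norm_num)).clm_apply
    (differentiableAt_const e)

lemma eventually_differentiableAt {f : E → V} {y : E} (hf : ContDiffAt ℝ 2 f y) :
    ∀ᶠ z in nhds y, DifferentiableAt ℝ f z :=
  (hf.eventually (by simp)).mono fun _ hz => hz.differentiableAt (by norm_num)

lemma dirDeriv_congr {f g : E → V} {y : E} (h : f =ᶠ[nhds y] g) (e : E) :
    dirDeriv e f y = dirDeriv e g y :=
  congrArg (fun L : E →L[ℝ] V => L e) h.fderiv_eq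

lemma dirDeriv_clm_comp (L : V →L[ℝ] W) {f : E → V} {y : E} (hf : DifferentiableAt ℝ f y)
    (e : E) : dirDeriv e (fun z => L (f z)) y = L (dirDeriv e f y) := by
  simp only [dirDeriv, (L.hasFDerivAt.comp y hf.hasFDerivAt).fderiv,
    show (fun z => L (f z)) = L ∘ f from rfl, ContinuousLinearMap.comp_apply]

lemma dirDeriv_dirDeriv_clm_comp (L : V →L[ℝ] W) {f : E → V} {y : E} (hf : ContDiffAt ℝ 2 f y)
    (e : E) :
    dirDeriv e (dirDeriv e fun z => L (f z)) y = L (dirDeriv e (dirDeriv e f) y) := by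
  have h : dirDeriv e (fun z => L (f z)) =ᶠ[nhds y] fun z => L (dirDeriv e f z) :=
    (eventually_differentiableAt hf).mono fun _ hz => dirDeriv_clm_comp L hz e
  rw [dirDeriv_congr h]
  exact dirDeriv_clm_comp L (differentiableAt_dirDeriv hf e) e

lemma dirDeriv_mul {f g : E → ℝ} {y : E} (hf : DifferentiableAt ℝ f y)
    (hg : DifferentiableAt ℝ g y) (e : E) :
    dirDeriv e (fun z => f z * g z) y = dirDeriv e f y * g y + f y * dirDeriv e g y := by
  simp only [dirDeriv, fderiv_fun_mul hf hg, add_apply, smul_apply, smul_eq_mul]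
  ring

lemma dirDeriv_inner {H : Type*} [NormedAddCommGroup H] [InnerProductSpace ℝ H] {f g : E → H}
    {y : E} (hf : DifferentiableAt ℝ f y) (hg : DifferentiableAt ℝ g y) (e : E) :
    dirDeriv e (fun z => ⟪f z, g z⟫_ℝ) y =
      ⟪f y, dirDeriv e g y⟫_ℝ + ⟪dirDeriv e f y, g y⟫_ℝ :=
  fderiv_inner_apply ℝ hf hg e

end DirDeriv

section Kato

variable {E H : Type*} [NormedAddCommGroup E] [NormedSpace ℝ E]
  [NormedAddCommGroup H] [InnerProductSpace ℝ H] {f : E → H} {y : E}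

lemma norm_mul_dirDeriv_norm (hf : DifferentiableAt ℝ f y) (h0 : f y ≠ 0) (e : E) :
    ‖f y‖ * dirDeriv e (fun z => ‖f z‖) y = ⟪f y, dirDeriv e f y⟫_ℝ := by
  have h : dirDeriv e (fun z => ‖f z‖ * ‖f z‖) y = dirDeriv e (fun z => ⟪f z, f z⟫_ℝ) y := by
    simp only [real_inner_self_eq_norm_mul_norm]
  have hN : DifferentiableAt ℝ (fun z => ‖f z‖) y := hf.norm ℝ h0
  rw [dirDeriv_mul hN hN, dirDeriv_inner hf hf, real_inner_comm (f y) (dirDeriv e f y)] at h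
  linarith

lemma norm_mul_dirDeriv_dirDeriv_norm (hf : ContDiffAt ℝ 2 f y) (h0 : f y ≠ 0) (e : E) :
    ‖f y‖ * dirDeriv e (dirDeriv e fun z => ‖f z‖) y =
      ⟪f y, dirDeriv e (dirDeriv e f) y⟫_ℝ + ‖dirDeriv e f y‖ ^ 2
        - dirDeriv e (fun z => ‖f z‖) y ^ 2 := by
  -- Differentiate `‖f‖ ∂_e‖f‖ = ⟪f, ∂_e f⟫` once more.
  have hd : DifferentiableAt ℝ f y := hf.differentiableAt (by norm_num)
  have hnear : (fun z => ‖f z‖ * dirDeriv e (fun w => ‖f w‖) z) =ᶠ[nhds y]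
      fun z => ⟪f z, dirDeriv e f z⟫_ℝ := by
    filter_upwards [eventually_differentiableAt hf, hf.continuousAt.eventually_ne h0] with z hz hz0
    exact norm_mul_dirDeriv_norm hz hz0 e
  have h := dirDeriv_congr hnear e
  rw [dirDeriv_mul (hd.norm ℝ h0) (differentiableAt_dirDeriv (hf.norm ℝ h0) e),
    dirDeriv_inner hd (differentiableAt_dirDeriv hf e), real_inner_self_eq_norm_sq] at h
  linarith

lemma abs_dirDeriv_norm_le (hf : DifferentiableAt ℝ f y) (h0 : f y ≠ 0) (e : E)
    {A : H →ₗ[ℝ] H} (hA : ∀ v w, ⟪A v, w⟫_ℝ = -⟪v, A w⟫_ℝ) :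
    |dirDeriv e (fun z => ‖f z‖) y| ≤ ‖dirDeriv e f y + A (f y)‖ := by
  have horth : ⟪f y, A (f y)⟫_ℝ = 0 := by
    linarith [hA (f y) (f y), real_inner_comm (f y) (A (f y))]
  have hcs := abs_real_inner_le_norm (f y) (dirDeriv e f y + A (f y))
  rw [inner_add_right, horth, add_zero, ← norm_mul_dirDeriv_norm hf h0 e, abs_mul, abs_norm] at hcs
  exact le_of_mul_le_mul_left hcs (norm_pos_iff.2 h0)

lemma inner_covariant_le_norm_mul_dirDeriv_dirDeriv_norm (hf : ContDiffAt ℝ 2 f y) (h0 : f y ≠ 0)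
    (e : E) {A : H →ₗ[ℝ] H} (hA : ∀ v w, ⟪A v, w⟫_ℝ = -⟪v, A w⟫_ℝ) :
    ⟪f y, dirDeriv e (dirDeriv e f) y + (2 : ℝ) • A (dirDeriv e f y) + A (A (f y))⟫_ℝ
      ≤ ‖f y‖ * dirDeriv e (dirDeriv e fun z => ‖f z‖) y := by
  have hkato := sq_le_sq.2 ((abs_dirDeriv_norm_le (hf.differentiableAt (by norm_num)) h0 e hA).trans
    (le_abs_self _))
  have hcross : ⟪f y, A (dirDeriv e f y)⟫_ℝ = -⟪dirDeriv e f y, A (f y)⟫_ℝ := by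
    rw [real_inner_comm, hA]
  have hquad : ⟪f y, A (A (f y))⟫_ℝ = -‖A (f y)‖ ^ 2 := by
    rw [← neg_eq_iff_eq_neg, ← hA, real_inner_self_eq_norm_sq]
  rw [norm_add_sq_real] at hkato
  rw [norm_mul_dirDeriv_dirDeriv_norm hf h0, inner_add_right, inner_add_right,
    real_inner_smul_right, hcross, hquad]
  linarith

end Kato

section Frobenius

open scoped Matrix.Norms.Frobenius

variable {n : ℕ}

lemma fipE_eq_trace (A B : Mat n) : fipE A B = ((Matrix.of A).transpose * Matrix.of B).trace := by
  simp only [fipE, Matrix.trace, Matrix.diag_apply, Matrix.mul_apply, Matrix.transpose_apply,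
    Matrix.of_apply]
  exact Finset.sum_comm

lemma of_brkt (A B : Mat n) :
    Matrix.of (brkt A B) = Matrix.of A * Matrix.of B - Matrix.of B * Matrix.of A := by
  ext μ ν
  simp [brkt, Matrix.mul_apply]

lemma fipE_brkt_left {A : Mat n} (hA : skewM A) (B C : Mat n) :
    fipE (brkt A B) C = -fipE B (brkt A C) := by
  have hAt : (Matrix.of A).transpose = -Matrix.of A := by
    ext μ ν
    exact hA μ ν
  simp only [fipE_eq_trace, of_brkt, Matrix.transpose_sub, Matrix.transpose_mul, hAt, mul_neg,
    neg_mul, sub_mul, mul_sub, Matrix.trace_sub, Matrix.trace_neg, mul_assoc]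
  rw [Matrix.trace_mul_comm (Matrix.of A), mul_assoc]
  ring

lemma fnormE_eq_norm (A : Mat n) : fnormE A = ‖Matrix.of A‖ := by
  simp [fnormE, fipE, Matrix.frobenius_norm_def, Real.sqrt_eq_rpow, pow_two]

lemma fnormE_nonneg (A : Mat n) : 0 ≤ fnormE A := Real.sqrt_nonneg _

lemma fipE_self_nonneg (A : Mat n) : 0 ≤ fipE A A :=
  Finset.sum_nonneg fun _ _ => Finset.sum_nonneg fun _ _ => mul_self_nonneg _

lemma sq_fnormE (A : Mat n) : fnormE A ^ 2 = fipE A A := Real.sq_sqrt (fipE_self_nonneg A)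

lemma fipE_le_fnormE_mul_fnormE (A B : Mat n) : fipE A B ≤ fnormE A * fnormE B := by
  have h := Real.sum_mul_le_sqrt_mul_sqrt Finset.univ
    (fun k : Fin n × Fin n => A k.1 k.2) (fun k => B k.1 k.2)
  simpa only [fipE, fnormE, Fintype.sum_prod_type, pow_two] using h

lemma fnormE_add_le (A B : Mat n) : fnormE (A + B) ≤ fnormE A + fnormE B := by
  simp only [fnormE_eq_norm]
  exact norm_add_le (Matrix.of A) (Matrix.of B)

lemma fnormE_sub_le (A B : Mat n) : fnormE (A - B) ≤ fnormE A + fnormE B := by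
  simp only [fnormE_eq_norm]
  exact norm_sub_le (Matrix.of A) (Matrix.of B)

lemma fnormE_smul (c : ℝ) (A : Mat n) : fnormE (c • A) = |c| * fnormE A := by
  simp only [fnormE_eq_norm]
  exact norm_smul c (Matrix.of A)

lemma fnormE_brkt_le (A B : Mat n) : fnormE (brkt A B) ≤ 2 * (fnormE A * fnormE B) := by
  simp only [fnormE_eq_norm, of_brkt]
  linarith [norm_sub_le (Matrix.of A * Matrix.of B) (Matrix.of B * Matrix.of A),
    Matrix.frobenius_norm_mul (Matrix.of A) (Matrix.of B),
    Matrix.frobenius_norm_mul (Matrix.of B) (Matrix.of A),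
    mul_comm ‖Matrix.of A‖ ‖Matrix.of B‖]

end Frobenius

section Tuples

variable {n : ℕ}

/-- The Euclidean space of all entries of an `n`-tuple of `n × n` matrices: its norm is the
Frobenius norm of the tuple, whereas `Fin n → Mat n` itself carries the supremum norm. -/
abbrev TupleSpace (n : ℕ) := EuclideanSpace ℝ (Fin n × Fin n × Fin n)

/-- The tuple `v` as a vector of `TupleSpace n`. -/
def tupleVec : (Fin n → Mat n) →L[ℝ] TupleSpace n :=
  LinearMap.toContinuousLinearMap
    { toFun v := .toLp 2 fun k => v k.1 k.2.1 k.2.2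
      map_add' _ _ := rfl
      map_smul' _ _ := rfl }

@[simp]
lemma tupleVec_apply (v : Fin n → Mat n) (k : Fin n × Fin n × Fin n) :
    tupleVec v k = v k.1 k.2.1 k.2.2 := rfl

lemma tupleVec_ne_zero {v : Fin n → Mat n} (hv : v ≠ 0) : tupleVec v ≠ 0 := by
  contrapose! hv
  funext j μ ν
  exact congrArg (fun x : TupleSpace n => x (j, μ, ν)) hv

lemma inner_tupleVec (v w : Fin n → Mat n) :
    ⟪tupleVec v, tupleVec w⟫_ℝ = ∑ j, fipE (v j) (w j) := by
  simp [PiLp.inner_apply, fipE, Fintype.sum_prod_type, mul_comm]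

lemma sqrt_tnormSq (v : Fin n → Mat n) : √(tnormSq v) = ‖tupleVec v‖ := by
  rw [norm_eq_sqrt_real_inner, inner_tupleVec, tnormSq]

/-- The adjoint action `v ↦ ([A, v_j])_j` of a matrix on tuples. -/
def adTuple (A : Mat n) : TupleSpace n →ₗ[ℝ] TupleSpace n where
  toFun v := tupleVec fun j => brkt A fun μ ν => v (j, μ, ν)
  map_add' v w := by
    ext k
    simp only [tupleVec_apply, brkt, PiLp.add_apply, ← Finset.sum_add_distrib]
    exact Finset.sum_congr rfl fun _ _ => by ring
  map_smul' c v := by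
    ext k
    simp only [tupleVec_apply, brkt, PiLp.smul_apply, smul_eq_mul, RingHom.id_apply,
      Finset.mul_sum]
    exact Finset.sum_congr rfl fun _ _ => by ring

lemma inner_adTuple_left {A : Mat n} (hA : skewM A) (v w : TupleSpace n) :
    ⟪adTuple A v, w⟫_ℝ = -⟪v, adTuple A w⟫_ℝ := by
  change ⟪_, tupleVec fun j μ ν => w (j, μ, ν)⟫_ℝ = -⟪tupleVec fun j μ ν => v (j, μ, ν), _⟫_ℝ
  simp only [adTuple, LinearMap.coe_mk, AddHom.coe_mk, inner_tupleVec, fipE_brkt_left hA,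
    Finset.sum_neg_distrib]

/-- The zeroth-order action `v ↦ (Σ_i [v_i, F_{ij}])_j` of a curvature tensor `F` on tuples. -/
def curvatureAction (F : Fin n → Fin n → Mat n) (v : Fin n → Mat n) : Fin n → Mat n :=
  ∑ i, fun j => brkt (v i) (F i j)

lemma inner_curvatureAction_le {F : Fin n → Fin n → Mat n} {φ : ℝ} (hφ : ∀ i j, fnormE (F i j) ≤ φ)
    (v : Fin n → Mat n) :
    ⟪tupleVec v, tupleVec (curvatureAction F v)⟫_ℝ ≤ 2 * n * φ * ‖tupleVec v‖ ^ 2 := by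
  have hentry : ∀ i j,
      fipE (v j) (brkt (v i) (F i j)) ≤ φ * (fnormE (v i) ^ 2 + fnormE (v j) ^ 2) := by
    intro i j
    have hφ0 : 0 ≤ φ := (fnormE_nonneg _).trans (hφ i j)
    have hi := fnormE_nonneg (v i)
    have hj := fnormE_nonneg (v j)
    calc fipE (v j) (brkt (v i) (F i j))
        ≤ fnormE (v j) * (2 * (fnormE (v i) * fnormE (F i j))) :=
          (fipE_le_fnormE_mul_fnormE _ _).trans
            (mul_le_mul_of_nonneg_left (fnormE_brkt_le _ _) hj)
      _ ≤ fnormE (v j) * (2 * (fnormE (v i) * φ)) := by gcongr; exact hφ i j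
      _ = φ * (2 * fnormE (v i) * fnormE (v j)) := by ring
      _ ≤ φ * (fnormE (v i) ^ 2 + fnormE (v j) ^ 2) := by gcongr; exact two_mul_le_add_sq _ _
  calc ⟪tupleVec v, tupleVec (curvatureAction F v)⟫_ℝ
      = ∑ i, ∑ j, fipE (v j) (brkt (v i) (F i j)) := by
        simp only [curvatureAction, map_sum, inner_sum, inner_tupleVec]
    _ ≤ ∑ i, ∑ j, φ * (fnormE (v i) ^ 2 + fnormE (v j) ^ 2) :=
        Finset.sum_le_sum fun i _ => Finset.sum_le_sum fun j _ => hentry i j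
    _ = 2 * n * φ * ∑ j, fnormE (v j) ^ 2 := by
        simp only [← Finset.mul_sum, Finset.sum_add_distrib, Finset.sum_const, Finset.card_univ,
          Fintype.card_fin, nsmul_eq_mul]
        ring
    _ = 2 * n * φ * ‖tupleVec v‖ ^ 2 := by
        simp only [← real_inner_self_eq_norm_sq, inner_tupleVec, sq_fnormE]

end Tuples

section Soliton

variable {n : ℕ}

lemma aC_pos (hn : 5 ≤ n) : 0 < aC n := by
  have h5 : (5 : ℝ) ≤ n := by exact_mod_cast hn
  have hsqrt : 0 < √((n : ℝ) - 2) := Real.sqrt_pos.2 (by linarith)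
  unfold aC
  positivity

lemma bC_pos (hn : 5 ≤ n) (hn' : n ≤ 9) : 0 < bC n := by
  have h5 : (5 : ℝ) ≤ n := by exact_mod_cast hn
  have h9 : (n : ℝ) ≤ 9 := by exact_mod_cast hn'
  -- After squaring, positivity of `b` reads `(n - 2) (n - 4) (n - 10) < 0`.
  have hsqrt : √(2 * (n : ℝ) - 4) < (6 * n - 12) / (n + 2) := by
    rw [Real.sqrt_lt' (div_pos (by linarith) (by linarith)), div_pow, lt_div_iff₀ (by positivity)]
    nlinarith [mul_pos (mul_pos (by linarith : 0 < (n : ℝ) - 2) (by linarith : 0 < (n : ℝ) - 4))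
      (by linarith : 0 < 10 - (n : ℝ))]
  rw [lt_div_iff₀ (by linarith)] at hsqrt
  unfold bC
  linarith

lemma skewM_Wc (i : Fin n) (y : En n) : skewM (Wc i y) := by
  intro μ ν
  simp only [Wc, sigmaM]
  ring

lemma fipE_sigmaM_self (i : Fin n) (y : En n) :
    fipE (sigmaM i y) (sigmaM i y) = 2 * (‖y‖ ^ 2 - y i ^ 2) := by
  simp only [fipE, sigmaM, EuclideanSpace.real_norm_sq_eq]
  simp only [mul_sub, mul_ite, sub_mul, ite_mul, zero_mul, mul_zero, Finset.sum_sub_distrib,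
    Finset.sum_ite_eq, Finset.mem_univ, ↓reduceIte, Finset.sum_ite_irrel, Finset.sum_const_zero]
  simp only [pow_two]
  ring

lemma fnormE_sigmaM_le (i : Fin n) (y : En n) : fnormE (sigmaM i y) ≤ 2 * ‖y‖ := by
  rw [fnormE, fipE_sigmaM_self]
  exact Real.sqrt_le_iff.2 ⟨by positivity, by nlinarith [sq_nonneg (y i), sq_nonneg ‖y‖]⟩


lemma pder_sigmaM (i j μ ν : Fin n) (y : En n) :
    pder i (fun z => sigmaM j z μ ν) y = sigmaM j (EuclideanSpace.single i 1) μ ν := by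
  let L : En n →L[ℝ] ℝ := (if j = ν then EuclideanSpace.proj μ else 0)
    - (if j = μ then EuclideanSpace.proj ν else 0)
  have hL : ∀ z, L z = sigmaM j z μ ν := fun z => by
    simp only [L, sigmaM, sub_apply]
    split_ifs <;> simp
  simp only [pder, ← hL, L.fderiv]

/-- The denominator `a|y|² + b` of the soliton connection. -/
def solitonDenom (y : En n) : ℝ := aC n * ‖y‖ ^ 2 + bC n

lemma Wc_eq_smul (i : Fin n) (y : En n) : Wc i y = (solitonDenom y)⁻¹ • sigmaM i y := by
  funext μ ν
  exact div_eq_inv_mul _ _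

lemma hasFDerivAt_solitonDenom (y : En n) :
    HasFDerivAt solitonDenom (aC n • 2 • innerSL ℝ y) y :=
  ((hasStrictFDerivAt_norm_sq y).hasFDerivAt.const_mul (aC n)).add_const (bC n)

lemma pder_solitonDenom (i : Fin n) (y : En n) : pder i solitonDenom y = 2 * aC n * y i := by
  rw [pder, (hasFDerivAt_solitonDenom y).fderiv]
  simp only [smul_apply, coe_innerSL_apply, EuclideanSpace.inner_single_right, Real.ringHom_apply,
    one_mul, nsmul_eq_mul, Nat.cast_ofNat, smul_eq_mul]
  ring

lemma solitonDenom_pos (ha : 0 < aC n) (hb : 0 < bC n) (y : En n) : 0 < solitonDenom y := by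
  unfold solitonDenom
  positivity

lemma pderM_Wc (ha : 0 < aC n) (hb : 0 < bC n) (i j : Fin n) (y : En n) :
    pderM i (Wc j) y = (solitonDenom y)⁻¹ •
      (sigmaM j (EuclideanSpace.single i 1) - (2 * aC n * y i) • Wc j y) := by
  -- Differentiate `(a|y|² + b) W_j = σ_j`.
  funext μ ν
  have hD : ∀ z : En n, solitonDenom z ≠ 0 := fun z => (solitonDenom_pos ha hb z).ne'
  have hdiffD := (hasFDerivAt_solitonDenom y).differentiableAt
  have hdiffW : DifferentiableAt ℝ (fun z => Wc j z μ ν) y := by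
    have hσ : DifferentiableAt ℝ (fun z => sigmaM j z μ ν) y := by
      unfold sigmaM
      split_ifs <;> fun_prop
    exact hσ.fun_mul (hdiffD.fun_inv (hD y))
  have hprod : (fun z => solitonDenom z * Wc j z μ ν) = fun z => sigmaM j z μ ν :=
    funext fun z => mul_div_cancel₀ _ (hD z)
  have h := dirDeriv_mul hdiffD hdiffW (EuclideanSpace.single i 1)
  rw [hprod] at h
  change pder i _ y = pder i _ y * _ + _ * pderM i (Wc j) y μ ν at h
  rw [pder_sigmaM, pder_solitonDenom] at h
  simp only [Pi.smul_apply, Pi.sub_apply, smul_eq_mul, h]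
  rw [add_sub_cancel_left, inv_mul_cancel_left₀ (hD y)]

lemma fnormE_Wc_le (ha : 0 < aC n) (hb : 0 < bC n) (i : Fin n) (y : En n) :
    fnormE (Wc i y) ≤ 2 * ‖y‖ / solitonDenom y := by
  have hD := solitonDenom_pos ha hb y
  rw [Wc_eq_smul, fnormE_smul, abs_of_pos (inv_pos.2 hD), ← div_eq_inv_mul]
  gcongr
  exact fnormE_sigmaM_le i y

lemma sq_norm_div_solitonDenom_le (ha : 0 < aC n) (hb : 0 < bC n) (y : En n) :
    ‖y‖ ^ 2 / solitonDenom y ≤ (aC n)⁻¹ := by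
  rw [div_le_iff₀ (solitonDenom_pos ha hb y), solitonDenom, inv_mul_eq_div, le_div_iff₀ ha]
  linarith

lemma fnormE_pderM_Wc_le (ha : 0 < aC n) (hb : 0 < bC n) (i j : Fin n) (y : En n) :
    fnormE (pderM i (Wc j) y) ≤ 6 / solitonDenom y := by
  have hD := solitonDenom_pos ha hb y
  have hσ : fnormE (sigmaM j (EuclideanSpace.single i 1)) ≤ 2 := by
    simpa using fnormE_sigmaM_le j (EuclideanSpace.single i 1)
  have hW : fnormE ((2 * aC n * y i) • Wc j y) ≤ 4 :=
    calc fnormE ((2 * aC n * y i) • Wc j y)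
        = 2 * aC n * ‖y i‖ * fnormE (Wc j y) := by
          rw [fnormE_smul, abs_mul, abs_of_pos (by positivity), Real.norm_eq_abs]
      _ ≤ 2 * aC n * ‖y‖ * (2 * ‖y‖ / solitonDenom y) := by
          gcongr
          · exact fnormE_nonneg _
          · exact PiLp.norm_apply_le y i
          · exact fnormE_Wc_le ha hb j y
      _ = 4 * aC n * (‖y‖ ^ 2 / solitonDenom y) := by ring
      _ ≤ 4 * aC n * (aC n)⁻¹ := by
          gcongr
          exact sq_norm_div_solitonDenom_le ha hb y
      _ = 4 := mul_inv_cancel_right₀ ha.ne' 4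
  rw [pderM_Wc ha hb, fnormE_smul, abs_of_pos (inv_pos.2 hD), ← div_eq_inv_mul]
  gcongr
  linarith [fnormE_sub_le (sigmaM j (EuclideanSpace.single i 1)) ((2 * aC n * y i) • Wc j y)]

lemma fnormE_brkt_Wc_le (ha : 0 < aC n) (hb : 0 < bC n) (i j : Fin n) (y : En n) :
    fnormE (brkt (Wc i y) (Wc j y)) ≤ 8 * (aC n)⁻¹ / solitonDenom y := by
  have hD := solitonDenom_pos ha hb y
  calc fnormE (brkt (Wc i y) (Wc j y))
      ≤ 2 * (fnormE (Wc i y) * fnormE (Wc j y)) := fnormE_brkt_le _ _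
    _ ≤ 2 * (2 * ‖y‖ / solitonDenom y * (2 * ‖y‖ / solitonDenom y)) := by
        gcongr
        · exact fnormE_nonneg _
        · exact fnormE_Wc_le ha hb i y
        · exact fnormE_Wc_le ha hb j y
    _ = 8 * (‖y‖ ^ 2 / solitonDenom y) / solitonDenom y := by ring
    _ ≤ 8 * (aC n)⁻¹ / solitonDenom y := by
        gcongr
        exact sq_norm_div_solitonDenom_le ha hb y

lemma fnormE_Fc_le (ha : 0 < aC n) (hb : 0 < bC n) (i j : Fin n) (y : En n) :
    fnormE (Fc i j y) ≤ (12 + 8 * (aC n)⁻¹) / solitonDenom y := by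
  calc fnormE (Fc i j y)
      ≤ fnormE (pderM i (Wc j) y) + fnormE (pderM j (Wc i) y)
        + fnormE (brkt (Wc i y) (Wc j y)) :=
        (fnormE_add_le _ _).trans (add_le_add_left (fnormE_sub_le _ _) _)
    _ ≤ 6 / solitonDenom y + 6 / solitonDenom y + 8 * (aC n)⁻¹ / solitonDenom y := by
        gcongr
        · exact fnormE_pderM_Wc_le ha hb i j y
        · exact fnormE_pderM_Wc_le ha hb j i y
        · exact fnormE_brkt_Wc_le ha hb i j y
    _ = (12 + 8 * (aC n)⁻¹) / solitonDenom y := by ring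

lemma exists_fnormE_Fc_le (ha : 0 < aC n) (hb : 0 < bC n) :
    ∃ K : ℝ, ∀ (y : En n) (i j : Fin n), fnormE (Fc i j y) ≤ K / (1 + ‖y‖ ^ 2) := by
  refine ⟨(12 + 8 * (aC n)⁻¹) / min (aC n) (bC n), fun y i j => ?_⟩
  have hmin : min (aC n) (bC n) * (1 + ‖y‖ ^ 2) ≤ solitonDenom y := by
    have h := mul_le_mul_of_nonneg_right (min_le_left (aC n) (bC n)) (sq_nonneg ‖y‖)
    unfold solitonDenom
    linarith [min_le_right (aC n) (bC n)]
  have := lt_min ha hb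
  calc fnormE (Fc i j y) ≤ (12 + 8 * (aC n)⁻¹) / solitonDenom y := fnormE_Fc_le ha hb i j y
    _ ≤ (12 + 8 * (aC n)⁻¹) / (min (aC n) (bC n) * (1 + ‖y‖ ^ 2)) := by gcongr
    _ = (12 + 8 * (aC n)⁻¹) / min (aC n) (bC n) / (1 + ‖y‖ ^ 2) := (div_div _ _ _).symm

end Soliton

section LinearizedOperator

variable {n : ℕ} {f : En n → Fin n → Mat n} {y : En n}

lemma pderM_eq_dirDeriv (hf : DifferentiableAt ℝ f y) (i j : Fin n) :
    pderM i (fun z => f z j) y = fun μ ν =>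
      dirDeriv (EuclideanSpace.single i 1) (fun z => tupleVec (f z)) y (j, μ, ν) := by
  funext μ ν
  exact dirDeriv_clm_comp (EuclideanSpace.proj (j, μ, ν))
    (tupleVec.differentiableAt.comp y hf) (EuclideanSpace.single i 1)

lemma lapM_eq_sum_dirDeriv (hf : ContDiffAt ℝ 2 f y) (j μ ν : Fin n) :
    lapM (fun z => f z j) y μ ν =
      ∑ i, dirDeriv (EuclideanSpace.single i 1) (dirDeriv (EuclideanSpace.single i 1)
        fun z => tupleVec (f z)) y (j, μ, ν) := by
  unfold lapM lapS
  exact Finset.sum_congr rfl fun i _ => dirDeriv_dirDeriv_clm_comp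
    (EuclideanSpace.proj (j, μ, ν)) (tupleVec.contDiff.contDiffAt.comp y hf)
    (EuclideanSpace.single i 1)

lemma tupleVec_Lop (hf : ContDiffAt ℝ 2 f y) :
    let U : En n → TupleSpace n := fun z => tupleVec (f z)
    let e : Fin n → En n := fun i => EuclideanSpace.single i 1
    tupleVec (Lop f y) =
      ∑ i, (dirDeriv (e i) (dirDeriv (e i) U) y + (2 : ℝ) • adTuple (Wc i y) (dirDeriv (e i) U y)
          + adTuple (Wc i y) (adTuple (Wc i y) (U y)))
        - (1 / 2 : ℝ) • ∑ i, y i • dirDeriv (e i) U y - (1 / 2 : ℝ) • U y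
        + (2 : ℝ) • tupleVec (curvatureAction (fun i j => Fc i j y) (f y)) := by
  intro U e
  ext ⟨j, μ, ν⟩
  have hd : DifferentiableAt ℝ f y := hf.differentiableAt (by norm_num)
  simp only [tupleVec_apply, Lop, Pi.add_apply, Pi.sub_apply, Pi.smul_apply, Finset.sum_apply,
    PiLp.add_apply, PiLp.sub_apply, PiLp.smul_apply, WithLp.ofLp_sum, Finset.sum_add_distrib,
    ← Finset.smul_sum, lapM_eq_sum_dirDeriv hf, pderM_eq_dirDeriv hd, curvatureAction, adTuple,
    LinearMap.coe_mk, AddHom.coe_mk, U, e]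
  ring

lemma inner_Lop_le (hf : ContDiffAt ℝ 2 f y) (h0 : f y ≠ 0) {φ : ℝ}
    (hφ : ∀ i j, fnormE (Fc i j y) ≤ φ) :
    ⟪tupleVec (f y), tupleVec (Lop f y)⟫_ℝ ≤
      ‖tupleVec (f y)‖ * (lapS (fun z => ‖tupleVec (f z)‖) y
        - (1 / 2) * ∑ i, y i * pder i (fun z => ‖tupleVec (f z)‖) y
        - (1 / 2) * ‖tupleVec (f y)‖ + 4 * n * φ * ‖tupleVec (f y)‖) := by
  let U : En n → TupleSpace n := fun z => tupleVec (f z)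
  let e : Fin n → En n := fun i => EuclideanSpace.single i 1
  have hU : ContDiffAt ℝ 2 U y := tupleVec.contDiff.contDiffAt.comp y hf
  have hU0 : U y ≠ 0 := tupleVec_ne_zero h0
  have hsecond : ∑ i, ⟪U y, dirDeriv (e i) (dirDeriv (e i) U) y
        + (2 : ℝ) • adTuple (Wc i y) (dirDeriv (e i) U y)
        + adTuple (Wc i y) (adTuple (Wc i y) (U y))⟫_ℝ
      ≤ ‖U y‖ * lapS (fun z => ‖U z‖) y := by
    rw [lapS, Finset.mul_sum]
    exact Finset.sum_le_sum fun i _ => inner_covariant_le_norm_mul_dirDeriv_dirDeriv_norm hU hU0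
      (e i) (inner_adTuple_left (skewM_Wc i y))
  have hdrift : ∑ i, y i * ⟪U y, dirDeriv (e i) U y⟫_ℝ
      = ‖U y‖ * ∑ i, y i * pder i (fun z => ‖U z‖) y := by
    rw [Finset.mul_sum]
    refine Finset.sum_congr rfl fun i _ => ?_
    rw [← norm_mul_dirDeriv_norm (hU.differentiableAt (by norm_num)) hU0, mul_left_comm]
    rfl
  have hcurv := inner_curvatureAction_le hφ (f y)
  rw [tupleVec_Lop hf]
  simp only [inner_add_right, inner_sub_right, inner_sum, real_inner_smul_right,
    real_inner_self_eq_norm_sq] at hsecond ⊢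
  linarith

lemma norm_mul_deriv_norm_tupleVec {v : ℝ → Fin n → Mat n} {τ : ℝ} (hv : DifferentiableAt ℝ v τ)
    (h0 : v τ ≠ 0) :
    ‖tupleVec (v τ)‖ * deriv (fun s => ‖tupleVec (v s)‖) τ =
      ⟪tupleVec (v τ), tupleVec (deriv v τ)⟫_ℝ := by
  have h := norm_mul_dirDeriv_norm (tupleVec.differentiableAt.comp τ hv) (tupleVec_ne_zero h0) 1
  exact h.trans (congrArg _ (dirDeriv_clm_comp tupleVec hv 1))

end LinearizedOperator

theorem norm_differential_inequality_general (n : ℕ) (hn : 5 ≤ n) (hn' : n ≤ 9) :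
    ∃ C₀ : ℝ, ∀ (u : En n → ℝ → Fin n → Mat n) (h : Fin n → Mat n) (y : En n) (τ : ℝ),
      ContDiffAt ℝ 2 (fun z => u z τ) y → DifferentiableAt ℝ (u y) τ →
      (∀ j, deriv (fun s => u y s j) τ = Lop (fun z => u z τ) y j + h j) → u y τ ≠ 0 →
        deriv (fun s => √(tnormSq (u y s))) τ
          - lapS (fun z => √(tnormSq (u z τ))) y
          + (1 / 2) * (∑ i, y i * pder i (fun z => √(tnormSq (u z τ))) y)
          + (1 / 2) * √(tnormSq (u y τ))
        ≤ √(tnormSq h) + (C₀ / (1 + ‖y‖ ^ 2)) * √(tnormSq (u y τ)) := by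
  obtain ⟨K, hK⟩ := exists_fnormE_Fc_le (aC_pos hn) (bC_pos hn hn')
  refine ⟨4 * n * K, fun u h y τ hspace htime heq h0 => ?_⟩
  simp only [sqrt_tnormSq]
  have hderiv : deriv (u y) τ = Lop (fun z => u z τ) y + h := by
    rw [deriv_pi (differentiableAt_pi.1 htime)]
    exact funext heq
  have hnorm := norm_mul_deriv_norm_tupleVec htime h0
  rw [hderiv, map_add, inner_add_right] at hnorm
  have hLop := inner_Lop_le hspace h0 (hK y)
  have hcs := real_inner_le_norm (tupleVec (u y τ)) (tupleVec h)
  refine le_of_mul_le_mul_left ?_ (norm_pos_iff.2 (tupleVec_ne_zero h0))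
  rw [mul_div_assoc]
  linarith

end

/-- Pointwise differential inequality for the norm of a solution of the linearized flow:
there is `C₀ = C₀(n)` such that if `u, h` are smooth on `ℝⁿ × I` (`I` open) and satisfy
`∂_τ u_j = (Lu)_j + h_j`, then at every point with `u(y,τ) ≠ 0`,
`∂_τ‖u‖_F − Δ_y‖u‖_F + (1/2)Σ_i y_i ∂_i‖u‖_F + (1/2)‖u‖_F ≤ ‖h‖_F + (C₀/(1+|y|²))‖u‖_F`. -/
theorem norm_differential_inequality (n : ℕ) (hn : 5 ≤ n) (hn' : n ≤ 9) :
    ∃ C₀ : ℝ, ∀ (I : Set ℝ), IsOpen I →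
      ∀ u h : En n → ℝ → Fin n → Mat n,
        ContDiffOn ℝ (⊤ : ℕ∞) (fun p : En n × ℝ => u p.1 p.2) (Set.univ ×ˢ I) →
        ContDiffOn ℝ (⊤ : ℕ∞) (fun p : En n × ℝ => h p.1 p.2) (Set.univ ×ˢ I) →
        (∀ (y : En n) (τ : ℝ), τ ∈ I → ∀ j,
          deriv (fun s => u y s j) τ = Lop (fun z k => u z τ k) y j + h y τ j) →
        ∀ (y : En n) (τ : ℝ), τ ∈ I → u y τ ≠ 0 →
          deriv (fun s => Real.sqrt (tnormSq (u y s))) τ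
            - lapS (fun z => Real.sqrt (tnormSq (u z τ))) y
            + (1 / 2) * (∑ i, y i * pder i (fun z => Real.sqrt (tnormSq (u z τ))) y)
            + (1 / 2) * Real.sqrt (tnormSq (u y τ))
          ≤ Real.sqrt (tnormSq (h y τ))
            + (C₀ / (1 + ‖y‖ ^ 2)) * Real.sqrt (tnormSq (u y τ)) := by
  obtain ⟨C₀, hC₀⟩ := norm_differential_inequality_general n hn hn'
  refine ⟨C₀, fun I hI u h hu _ heq y τ hτ => ?_⟩
  have hC2 : ContDiffAt ℝ 2 (fun p : En n × ℝ => u p.1 p.2) (y, τ) :=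
    (hu.contDiffAt ((isOpen_univ.prod hI).mem_nhds ⟨trivial, hτ⟩)).of_le
      (WithTop.coe_le_coe.2 (le_top (a := (2 : ℕ∞))))
  exact hC₀ u (h y τ) y τ (hC2.comp y (f := fun z => (z, τ)) (by fun_prop))
    ((hC2.differentiableAt two_ne_zero).comp τ (f := fun s => (y, s)) (by fun_prop)) (heq y τ hτ)
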